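/- Let 𝚫 = (Δ,R) be a gentle quiver. Then Σ_{𝒪 ∈ 𝒩/ℤ ⊔ 𝒞/ℤ} p(𝒪) = 2|Δ₀| − |Δ₁| and Σ_{𝒪 ∈ 𝒩/ℤ ⊔ 𝒞/ℤ} q(𝒪) = |Δ₁|. -/

import Mathlib

/-! Common formalization infrastructure for gentle quivers (Bobinski–Buan,
    "Derived equivalence classification of gentle cluster tilted algebras"). -/

/-- A (finite) quiver with (length-two, monomial) relations.  Vertices and
arrows are natural numbers; `V` and `A` are the finite sets of vertices and
arrows, `src`/`tgt` give the start and terminus of each arrow, and `rel` is the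
set of relations, a relation `(a, b)` standing for the length-two path
`a·b` (so `src a = tgt b`). -/
structure QuivRel where
  V : Finset ℕ
  A : Finset ℕ
  src : ℕ → ℕ
  tgt : ℕ → ℕ
  rel : Finset (ℕ × ℕ)

namespace GentleQuiv

/-- Two vertices are adjacent if some arrow joins them (in either direction). -/
def Adj (Q : QuivRel) (x y : ℕ) : Prop :=
  ∃ a ∈ Q.A, (Q.src a = x ∧ Q.tgt a = y) ∨ (Q.src a = y ∧ Q.tgt a = x)

/-- A quiver is connected if any two of its vertices are joined by a walk. -/
def Connected (Q : QuivRel) : Prop :=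
  ∀ x ∈ Q.V, ∀ y ∈ Q.V, Relation.ReflTransGen (Adj Q) x y

/-- `l = [α₁, …, αₙ]` is a (nonempty) path in the quiver: consecutive arrows
compose, i.e. `s αᵢ = t αᵢ₊₁`. -/
def IsPathList (Q : QuivRel) (l : List ℕ) : Prop :=
  l ≠ [] ∧ (∀ a ∈ l, a ∈ Q.A) ∧ l.Chain' (fun a b => Q.src a = Q.tgt b)

/-- The path `l` contains a subpath (two consecutive arrows) lying in `R`. -/
def HasRelSubpath (Q : QuivRel) (l : List ℕ) : Prop :=
  ∃ a b, (a, b) ∈ Q.rel ∧ [a, b] <:+: l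

/-- Gentle quiver: connected, relations are composable pairs of arrows, at most
two arrows in/out of every vertex, the usual gentleness conditions on
relations, and a global bound forcing finite dimensionality. -/
def IsGentle (Q : QuivRel) : Prop :=
  Q.V.Nonempty ∧
  (∀ a ∈ Q.A, Q.src a ∈ Q.V ∧ Q.tgt a ∈ Q.V) ∧
  Connected Q ∧
  (∀ ρ ∈ Q.rel, ρ.1 ∈ Q.A ∧ ρ.2 ∈ Q.A ∧ Q.src ρ.1 = Q.tgt ρ.2) ∧
  (∀ x, (Q.A.filter fun a => Q.src a = x).card ≤ 2) ∧
  (∀ x, (Q.A.filter fun a => Q.tgt a = x).card ≤ 2) ∧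
  (∀ a ∈ Q.A, (Q.A.filter fun b => Q.src b = Q.tgt a ∧ (b, a) ∉ Q.rel).card ≤ 1) ∧
  (∀ a ∈ Q.A, (Q.A.filter fun c => Q.tgt c = Q.src a ∧ (a, c) ∉ Q.rel).card ≤ 1) ∧
  (∀ a ∈ Q.A, (Q.A.filter fun b => (b, a) ∈ Q.rel).card ≤ 1) ∧
  (∀ a ∈ Q.A, (Q.A.filter fun c => (a, c) ∈ Q.rel).card ≤ 1) ∧
  (∃ n : ℕ, ∀ l : List ℕ, IsPathList Q l → l.length = n → HasRelSubpath Q l)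

/-- A choice of functions `σ, τ : Δ₁ → {±1}` as in Avella-Alaminos–Geiss. -/
structure SigmaTau (Q : QuivRel) where
  σ : ℕ → ℤ
  τ : ℕ → ℤ
  σ_pm : ∀ a ∈ Q.A, σ a = 1 ∨ σ a = -1
  τ_pm : ∀ a ∈ Q.A, τ a = 1 ∨ τ a = -1
  σ_src : ∀ a ∈ Q.A, ∀ b ∈ Q.A, a ≠ b → Q.src a = Q.src b → σ a = -σ b
  τ_tgt : ∀ a ∈ Q.A, ∀ b ∈ Q.A, a ≠ b → Q.tgt a = Q.tgt b → τ a = -τ b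
  rel_iff : ∀ a ∈ Q.A, ∀ b ∈ Q.A, Q.src a = Q.tgt b → ((a, b) ∈ Q.rel ↔ σ a = τ b)

/-- A thread: either a trivial path/antipath `1_{x,ε}` at a vertex `x` with a
sign `ε`, or a sequence of arrows of positive length. -/
inductive Thread where
  | triv (x : ℕ) (ε : ℤ) : Thread
  | arrows (l : List ℕ) : Thread
deriving DecidableEq

/-- Source of a thread. -/
def Thread.source (Q : QuivRel) : Thread → ℕ
  | .triv x _ => x
  | .arrows l => Q.src l.getLast!

/-- Target of a thread. -/
def Thread.target (Q : QuivRel) : Thread → ℕ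
  | .triv x _ => x
  | .arrows l => Q.tgt l.head!

/-- `σω` (for paths and antipaths alike; `σ 1_{x,ε} = ε = σ 1'_{x,ε}`). -/
def Thread.sigma {Q : QuivRel} (st : SigmaTau Q) : Thread → ℤ
  | .triv _ ε => ε
  | .arrows l => st.σ l.getLast!

/-- `τω` when `ω` is regarded as a path (`τ 1_{x,ε} = -ε`). -/
def Thread.tauPath {Q : QuivRel} (st : SigmaTau Q) : Thread → ℤ
  | .triv _ ε => -ε
  | .arrows l => st.τ l.head!

/-- `τω` when `ω` is regarded as an antipath (`τ 1'_{x,ε} = ε`). -/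
def Thread.tauAnti {Q : QuivRel} (st : SigmaTau Q) : Thread → ℤ
  | .triv _ ε => ε
  | .arrows l => st.τ l.head!

/-- Length of a thread. -/
def Thread.len : Thread → ℕ
  | .triv _ _ => 0
  | .arrows l => l.length

/-- A path in `𝚫` of positive length (no two consecutive arrows in `R`). -/
def IsPermList (Q : QuivRel) (l : List ℕ) : Prop :=
  IsPathList Q l ∧ l.Chain' (fun a b => (a, b) ∉ Q.rel)

/-- An antipath in `𝚫` of positive length (all consecutive pairs in `R`). -/
def IsAntiList (Q : QuivRel) (l : List ℕ) : Prop :=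
  l ≠ [] ∧ (∀ a ∈ l, a ∈ Q.A) ∧ l.Chain' (fun a b => (a, b) ∈ Q.rel)

/-- A thread is a path in `𝚫` (including trivial ones). -/
def IsPathThread (Q : QuivRel) : Thread → Prop
  | .triv x ε => x ∈ Q.V ∧ (ε = 1 ∨ ε = -1)
  | .arrows l => IsPermList Q l

/-- A thread is an antipath in `𝚫` (including trivial ones). -/
def IsAntiThread (Q : QuivRel) : Thread → Prop
  | .triv x ε => x ∈ Q.V ∧ (ε = 1 ∨ ε = -1)
  | .arrows l => IsAntiList Q l

/-- `w ∈ ℳ`: `w` is a maximal path of `𝚫`. -/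
def InM (Q : QuivRel) (st : SigmaTau Q) (w : Thread) : Prop :=
  IsPathThread Q w ∧
  (¬ ∃ a ∈ Q.A, Q.src a = w.target Q ∧ st.σ a = -(w.tauPath st)) ∧
  (¬ ∃ b ∈ Q.A, Q.tgt b = w.source Q ∧ st.τ b = -(w.sigma st))

/-- `w ∈ 𝒩`: `w` is a maximal antipath of `𝚫`. -/
def InN (Q : QuivRel) (st : SigmaTau Q) (w : Thread) : Prop :=
  IsAntiThread Q w ∧
  (¬ ∃ a ∈ Q.A, Q.src a = w.target Q ∧ st.σ a = w.tauAnti st) ∧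
  (¬ ∃ b ∈ Q.A, Q.tgt b = w.source Q ∧ st.τ b = w.sigma st)

/-- The graph of the bijection `Φ = φ ∘ ψ : 𝒩 → 𝒩`:  `PhiRel Q st w w'` holds
iff `w, w' ∈ 𝒩` and the maximal path `ψ w` (with `s(ψw) = sw`, `σ(ψw) = -σw`)
satisfies `t w' = t (ψ w)` and `τ w' = -τ(ψ w)`, i.e. `w' = φ (ψ w) = Φ w`. -/
def PhiRel (Q : QuivRel) (st : SigmaTau Q) (w w' : Thread) : Prop :=
  InN Q st w ∧ InN Q st w' ∧
  ∃ m : Thread, InM Q st m ∧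
    m.source Q = w.source Q ∧ m.sigma st = -(w.sigma st) ∧
    w'.target Q = m.target Q ∧ w'.tauAnti st = -(m.tauPath st)

/-- `O` is an orbit of the `ℤ`-action on `𝒩` induced by `Φ`. -/
def NOrbit (Q : QuivRel) (st : SigmaTau Q) (O : Set Thread) : Prop :=
  ∃ w, InN Q st w ∧ O = {w' | Relation.EqvGen (PhiRel Q st) w w'}

/-- `p(𝒪) = |𝒪|` for an orbit `𝒪 ∈ 𝒩/ℤ`. -/
noncomputable def pN (O : Set Thread) : ℕ := O.ncard

/-- `q(𝒪) = Σ_{ω ∈ 𝒪} ℓ(ω)` for an orbit `𝒪 ∈ 𝒩/ℤ`. -/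
noncomputable def qN (O : Set Thread) : ℕ := ∑ᶠ w ∈ O, Thread.len w

/-- `a ∈ 𝒞`: the arrow `a` occurs in no maximal antipath. -/
def InC (Q : QuivRel) (st : SigmaTau Q) (a : ℕ) : Prop :=
  a ∈ Q.A ∧ ¬ ∃ l : List ℕ, InN Q st (.arrows l) ∧ a ∈ l

/-- The graph of the bijection `Ψ : 𝒞 → 𝒞`. -/
def PsiRel (Q : QuivRel) (st : SigmaTau Q) (a b : ℕ) : Prop :=
  InC Q st a ∧ InC Q st b ∧ Q.tgt b = Q.src a ∧ st.τ b = st.σ a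

/-- `O` is an orbit of the `ℤ`-action on `𝒞` induced by `Ψ`. -/
def COrbit (Q : QuivRel) (st : SigmaTau Q) (O : Set ℕ) : Prop :=
  ∃ a, InC Q st a ∧ O = {b | Relation.EqvGen (PsiRel Q st) a b}

/-- The Avella-Alaminos–Geiss invariant `f_𝚫 : ℕ² → ℕ`:  `f_𝚫 (p,q)` counts the
orbits `𝒪 ∈ 𝒩/ℤ ⊔ 𝒞/ℤ` with `p(𝒪) = p` and `q(𝒪) = q`. -/
noncomputable def fInv (Q : QuivRel) (st : SigmaTau Q) : ℕ × ℕ → ℕ := fun pq =>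
  {O : Set Thread | NOrbit Q st O ∧ pN O = pq.1 ∧ qN O = pq.2}.ncard +
  {O : Set ℕ | COrbit Q st O ∧ pq.1 = 0 ∧ O.ncard = pq.2}.ncard

/-- `[p, q] : ℕ² → ℕ`, the characteristic function of `{(p, q)}`. -/
def charFn (p q : ℕ) : ℕ × ℕ → ℕ := fun pq => if pq = (p, q) then 1 else 0

/-- Tree type: `|Δ₀| = |Δ₁| + 1`. -/
def TreeType (Q : QuivRel) : Prop := Q.V.card = Q.A.card + 1

/-- Removing a set of arrows (keeping all vertices); relations containing a
removed arrow are discarded. -/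
def deleteArrows (Q : QuivRel) (S : Finset ℕ) : QuivRel where
  V := Q.V
  A := Q.A \ S
  src := Q.src
  tgt := Q.tgt
  rel := Q.rel.filter fun ρ => ρ.1 ∉ S ∧ ρ.2 ∉ S

/-- Branch arrow: removing it disconnects the quiver. -/
def BranchArrow (Q : QuivRel) (a : ℕ) : Prop :=
  a ∈ Q.A ∧ ¬ Connected (deleteArrows Q {a})

/-- Cycle arrow: removing it leaves the quiver connected. -/
def CycleArrow (Q : QuivRel) (a : ℕ) : Prop :=
  a ∈ Q.A ∧ Connected (deleteArrows Q {a})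

/-- Branch relation: a relation one of whose arrows is a branch arrow. -/
def BranchRel (Q : QuivRel) (ρ : ℕ × ℕ) : Prop :=
  ρ ∈ Q.rel ∧ (BranchArrow Q ρ.1 ∨ BranchArrow Q ρ.2)

/-- A relation `ρ = (α, β)` is isolated if the antipath `(α, β)` is a maximal
antipath, i.e. `ρ ∈ 𝒩`. -/
def Isolated (Q : QuivRel) (st : SigmaTau Q) (ρ : ℕ × ℕ) : Prop :=
  ρ ∈ Q.rel ∧ InN Q st (.arrows [ρ.1, ρ.2])

/-- `Q'` is obtained from `Q` by completing the relations from `R₀`, the new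
arrow attached to `ρ ∈ R₀` being `γ ρ`. -/
structure IsCompletion (Q : QuivRel) (R0 : Finset (ℕ × ℕ)) (γ : ℕ × ℕ → ℕ)
    (Q' : QuivRel) : Prop where
  subset : R0 ⊆ Q.rel
  fresh : ∀ ρ ∈ R0, γ ρ ∉ Q.A
  inj : ∀ ρ ∈ R0, ∀ ρ' ∈ R0, γ ρ = γ ρ' → ρ = ρ'
  V_eq : Q'.V = Q.V
  A_eq : Q'.A = Q.A ∪ R0.image γ
  src_old : ∀ a ∈ Q.A, Q'.src a = Q.src a
  tgt_old : ∀ a ∈ Q.A, Q'.tgt a = Q.tgt a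
  src_new : ∀ ρ ∈ R0, Q'.src (γ ρ) = Q.tgt ρ.1
  tgt_new : ∀ ρ ∈ R0, Q'.tgt (γ ρ) = Q.src ρ.2
  rel_eq : Q'.rel = Q.rel ∪ R0.image (fun ρ => (γ ρ, ρ.1)) ∪
      R0.image (fun ρ => (ρ.2, γ ρ))

/-- A 3-cycle: three pairwise distinct arrows forming an oriented cycle. -/
def Is3Cycle (Q : QuivRel) (a0 a1 a2 : ℕ) : Prop :=
  a0 ∈ Q.A ∧ a1 ∈ Q.A ∧ a2 ∈ Q.A ∧ a0 ≠ a1 ∧ a1 ≠ a2 ∧ a0 ≠ a2 ∧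
  Q.src a0 = Q.tgt a1 ∧ Q.src a1 = Q.tgt a2 ∧ Q.src a2 = Q.tgt a0

/-- A triangle: a 3-cycle all of whose three compositions are relations. -/
def IsTriangleTriple (Q : QuivRel) (a0 a1 a2 : ℕ) : Prop :=
  Is3Cycle Q a0 a1 a2 ∧ (a0, a1) ∈ Q.rel ∧ (a1, a2) ∈ Q.rel ∧ (a2, a0) ∈ Q.rel

/-- The (unordered) set of arrows of a triangle. -/
def TriangleSet (Q : QuivRel) (O : Finset ℕ) : Prop :=
  ∃ a0 a1 a2, O = {a0, a1, a2} ∧ IsTriangleTriple Q a0 a1 a2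

/-- Branch triangle: removing any two of its arrows disconnects the quiver. -/
def BranchTriangle (Q : QuivRel) (O : Finset ℕ) : Prop :=
  TriangleSet Q O ∧ ∀ S ⊆ O, S.card = 2 → ¬ Connected (deleteArrows Q S)

/-- Free relation: a relation neither of whose arrows lies in `𝒞`. -/
def FreeRel (Q : QuivRel) (st : SigmaTau Q) (ρ : ℕ × ℕ) : Prop :=
  ρ ∈ Q.rel ∧ ¬ InC Q st ρ.1 ∧ ¬ InC Q st ρ.2

/-- The class `𝒜`: gentle quivers with `f_𝚫 = m·[0,3] + [p+m+2, p]`. -/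
def ClassA (Q : QuivRel) (st : SigmaTau Q) : Prop :=
  IsGentle Q ∧ ∃ m p : ℕ, ∀ x, fInv Q st x = m * charFn 0 3 x + charFn (p + m + 2) p x

/-- The class `Ã`: gentle quivers with
`f_𝚫 = (m₁+m₂)·[0,3] + [p+m₁, p] + [q+m₂, q]`, `p+m₁ > 0`, `q+m₂ > 0`. -/
def ClassAtilde (Q : QuivRel) (st : SigmaTau Q) : Prop :=
  IsGentle Q ∧ ∃ m1 m2 p q : ℕ, 0 < p + m1 ∧ 0 < q + m2 ∧
    ∀ x, fInv Q st x =
      (m1 + m2) * charFn 0 3 x + charFn (p + m1) p x + charFn (q + m2) q x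

/-- Isomorphism of quivers with relations. -/
def IsoQR (Q Q' : QuivRel) : Prop :=
  ∃ fV fA : ℕ → ℕ,
    Set.BijOn fV ↑Q.V ↑Q'.V ∧ Set.BijOn fA ↑Q.A ↑Q'.A ∧
    (∀ a ∈ Q.A, Q'.src (fA a) = fV (Q.src a) ∧ Q'.tgt (fA a) = fV (Q.tgt a)) ∧
    (∀ a ∈ Q.A, ∀ b ∈ Q.A, ((a, b) ∈ Q.rel ↔ (fA a, fA b) ∈ Q'.rel))

/-- The quiver has no loops. -/
def NoLoops (Q : QuivRel) : Prop := ∀ a ∈ Q.A, Q.src a ≠ Q.tgt a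

/-- The reflection at `x` is defined: every arrow starting at `x` admits a
(necessarily unique) companion arrow ending at `x` not bound by a relation. -/
def CanReflect (Q : QuivRel) (x : ℕ) : Prop :=
  x ∈ Q.V ∧ ∀ a ∈ Q.A, Q.src a = x → ∃ b ∈ Q.A, Q.tgt b = x ∧ (a, b) ∉ Q.rel

/-- `Q'` is the reflection of the gentle loop-free quiver `Q` at the vertex
`x`, following Brenner–Butler tilting. -/
def IsReflection (Q : QuivRel) (x : ℕ) (Q' : QuivRel) : Prop :=
  IsGentle Q ∧ NoLoops Q ∧ CanReflect Q x ∧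
  Q'.V = Q.V ∧ Q'.A = Q.A ∧
  (∀ a ∈ Q.A, Q.tgt a = x → Q'.src a = x ∧ Q'.tgt a = Q.src a) ∧
  (∀ a ∈ Q.A, Q.src a = x →
    ∀ b ∈ Q.A, Q.tgt b = x → (a, b) ∉ Q.rel → Q'.src a = Q.src b) ∧
  (∀ a ∈ Q.A, Q.tgt a ≠ x → Q.src a ≠ x → Q'.src a = Q.src a) ∧
  (∀ a ∈ Q.A, Q.tgt a ≠ x →
    ((∃ b ∈ Q.A, Q.tgt b = x ∧ Q.src b = Q.tgt a ∧ (b, a) ∈ Q.rel) → Q'.tgt a = x) ∧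
    ((¬ ∃ b ∈ Q.A, Q.tgt b = x ∧ Q.src b = Q.tgt a ∧ (b, a) ∈ Q.rel) →
      Q'.tgt a = Q.tgt a)) ∧
  (∀ a b : ℕ, (a, b) ∈ Q'.rel ↔
    (((a, b) ∈ Q.rel ∧ Q.tgt a ≠ x ∧ Q.src a ≠ x) ∨
     (a ∈ Q.A ∧ b ∈ Q.A ∧ Q.src a = x ∧ Q.tgt b = x ∧ (a, b) ∉ Q.rel) ∨
     (a ∈ Q.A ∧ b ∈ Q.A ∧ Q.tgt a = x ∧
       ∃ c ∈ Q.A, c ≠ a ∧ Q.tgt c = x ∧ Q.src c = Q.tgt b ∧ (c, b) ∈ Q.rel)))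

/-- The opposite quiver with relations. -/
def opQR (Q : QuivRel) : QuivRel where
  V := Q.V
  A := Q.A
  src := Q.tgt
  tgt := Q.src
  rel := Q.rel.image fun ρ => (ρ.2, ρ.1)

/-- Coreflection: the dual of reflection. -/
def IsCoreflection (Q : QuivRel) (x : ℕ) (Q' : QuivRel) : Prop :=
  IsReflection (opQR Q) x (opQR Q')

/-- One step of reflection equivalence: a reflection, a coreflection, or an
isomorphism of quivers with relations. -/
def RefStep (Q Q' : QuivRel) : Prop :=
  (∃ x, IsReflection Q x Q') ∨ (∃ x, IsCoreflection Q x Q') ∨ IsoQR Q Q'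

/-- Reflection equivalence: a finite sequence of reflections/coreflections,
up to isomorphism of quivers with relations. -/
def RefEquiv : QuivRel → QuivRel → Prop := Relation.ReflTransGen RefStep

/-- A cyclic orientation of a `1`-cycle quiver without branch arrows (i.e. a
cycle): enumerations of the vertices and arrows by `ZMod n` such that the
`i`-th arrow joins the `i`-th and `(i+1)`-st vertices. -/
structure CyclicOrientation (Q : QuivRel) (n : ℕ) where
  ev : ZMod n → ℕ
  ea : ZMod n → ℕ
  ev_mem : ∀ i, ev i ∈ Q.V
  ea_mem : ∀ i, ea i ∈ Q.A
  ev_inj : Function.Injective ev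
  ea_inj : Function.Injective ea
  ev_surj : ∀ v ∈ Q.V, ∃ i, ev i = v
  ea_surj : ∀ a ∈ Q.A, ∃ i, ea i = a
  compat : ∀ i : ZMod n,
    (Q.src (ea i) = ev i ∧ Q.tgt (ea i) = ev (i + 1)) ∨
    (Q.src (ea i) = ev (i + 1) ∧ Q.tgt (ea i) = ev i)

/-- Clockwise arrow with respect to a cyclic orientation. -/
def Clockwise (Q : QuivRel) {n : ℕ} (co : CyclicOrientation Q n) (a : ℕ) : Prop :=
  a ∈ Q.A ∧ ∃ i : ZMod n, co.ea i = a ∧ Q.src a = co.ev i ∧ Q.tgt a = co.ev (i + 1)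

/-- Anticlockwise arrow with respect to a cyclic orientation. -/
def Anticlockwise (Q : QuivRel) {n : ℕ} (co : CyclicOrientation Q n) (a : ℕ) : Prop :=
  a ∈ Q.A ∧ ∃ i : ZMod n, co.ea i = a ∧ Q.src a = co.ev (i + 1) ∧ Q.tgt a = co.ev i

end GentleQuiv

namespace GentleQuiv

section Helpers

/-- A chain whose last element has no successor. -/
def TermChain (R : ℕ → ℕ → Prop) (l : List ℕ) : Prop :=
  l.IsChain R ∧ ∀ x ∈ l.getLast?, ∀ b, ¬ R x b

theorem TermChain.suffix {R : ℕ → ℕ → Prop} {p s : List ℕ} (hs : s ≠ [])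
    (h : TermChain R (p ++ s)) : TermChain R s := by
  refine ⟨(List.isChain_append.1 h.1).2.1, fun x hx => h.2 x ?_⟩
  rw [List.getLast?_append_of_ne_nil _ hs]; exact hx

theorem TermChain.eq {R : ℕ → ℕ → Prop} (hR : ∀ a b c, R a b → R a c → b = c) :
    ∀ (s s' : List ℕ) (a : ℕ), TermChain R (a :: s) → TermChain R (a :: s') → s = s'
  | [], [], _, _, _ => rfl
  | [], c :: t, a, h, h' => by
      exact absurd (List.isChain_cons_cons.1 h'.1).1 (h.2 a (by simp) c)
  | b :: t, [], a, h, h' => by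
      exact absurd (List.isChain_cons_cons.1 h.1).1 (h'.2 a (by simp) b)
  | b :: t, c :: t', a, h, h' => by
      have hbc : b = c :=
        hR a b c (List.isChain_cons_cons.1 h.1).1 (List.isChain_cons_cons.1 h'.1).1
      subst hbc
      have h1 : TermChain R (b :: t) := TermChain.suffix (p := [a]) (by simp) h
      have h2 : TermChain R (b :: t') := TermChain.suffix (p := [a]) (by simp) h'
      rw [TermChain.eq hR t t' b h1 h2]

theorem TermChain.nodup {R : ℕ → ℕ → Prop} (hR : ∀ a b c, R a b → R a c → b = c) :
    ∀ l : List ℕ, TermChain R l → l.Nodup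
  | [], _ => List.nodup_nil
  | a :: t, h => by
      rw [List.nodup_cons]
      refine ⟨fun ha => ?_, ?_⟩
      · obtain ⟨p, s, rfl⟩ := List.append_of_mem ha
        have h2 : TermChain R (a :: s) := TermChain.suffix (p := a :: p) (by simp) h
        have := congrArg List.length (TermChain.eq hR _ _ a h h2)
        simp at this
        omega
      · by_cases ht : t = []
        · subst ht; exact List.nodup_nil
        · exact TermChain.nodup hR t (TermChain.suffix (p := [a]) ht h)

/-- Chain, maximal in both directions. -/
def MaxChain (R : ℕ → ℕ → Prop) (l : List ℕ) : Prop :=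
  TermChain R l ∧ ∀ x ∈ l.head?, ∀ b, ¬ R b x

theorem MaxChain.rev {R : ℕ → ℕ → Prop} {l : List ℕ} (hc : l.IsChain R)
    (hh : ∀ x ∈ l.head?, ∀ b, ¬ R b x) :
    TermChain (fun a b => R b a) l.reverse :=
  ⟨List.isChain_reverse.2 hc, fun x hx => hh x (by simpa using hx)⟩

theorem MaxChain.eq_of_mem {R : ℕ → ℕ → Prop} (hR : ∀ a b c, R a b → R a c → b = c)
    (hR' : ∀ a b c, R b a → R c a → b = c) {l l' : List ℕ} (h : MaxChain R l)
    (h' : MaxChain R l') {a : ℕ} (ha : a ∈ l) (ha' : a ∈ l') : l = l' := by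
  obtain ⟨p, s, rfl⟩ := List.append_of_mem ha
  obtain ⟨p', s', rfl⟩ := List.append_of_mem ha'
  have h1 := TermChain.eq hR s s' a (TermChain.suffix (by simp) h.1)
    (TermChain.suffix (by simp) h'.1)
  have r := MaxChain.rev h.1.1 h.2
  have r' := MaxChain.rev h'.1.1 h'.2
  simp only [List.reverse_append, List.reverse_cons, List.append_assoc,
    List.singleton_append] at r r'
  have h2 := TermChain.eq (R := fun a b => R b a) hR' _ _ a (TermChain.suffix (by simp) r)
    (TermChain.suffix (by simp) r')
  rw [h1, List.reverse_injective h2]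

theorem MaxChain.exists {R : ℕ → ℕ → Prop} (A : Finset ℕ) (hA : ∀ a b, R a b → a ∈ A ∧ b ∈ A)
    (hR' : ∀ a b c, R b a → R c a → b = c) {b : ℕ} (hb : b ∈ A) (hh : ∀ a, ¬ R a b) :
    ∃ t : List ℕ, (∀ a ∈ b :: t, a ∈ A) ∧ MaxChain R (b :: t) := by
  by_contra hne
  push Not at hne
  have key : ∀ n : ℕ, ∃ t : List ℕ, t.length = n ∧ (∀ a ∈ b :: t, a ∈ A) ∧
      (b :: t).IsChain R := by
    intro n
    induction n with
    | zero => exact ⟨[], rfl, by simpa using hb, by simp⟩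
    | succ n ih =>
      obtain ⟨t, ht, htA, hc⟩ := ih
      have h1 := hne t htA
      have h2 : ¬ ∀ x ∈ (b :: t).getLast?, ∀ c, ¬ R x c := by
        intro h3
        refine h1 ⟨⟨hc, h3⟩, ?_⟩
        intro x hx
        simp at hx
        subst hx
        exact hh
      push Not at h2
      obtain ⟨x, hx, c, hxc⟩ := h2
      refine ⟨t ++ [c], by simp [ht], ?_, ?_⟩
      · intro a ha
        rw [← List.cons_append, List.mem_append] at ha
        rcases ha with ha | ha
        · exact htA a ha
        · simp at ha; subst ha; exact (hA _ _ hxc).2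
      · rw [← List.cons_append, List.isChain_append]
        refine ⟨hc, by simp, ?_⟩
        intro y hy z hz
        have : y = x := Option.mem_unique hy hx
        simp at hz
        subst hz this
        exact hxc
  obtain ⟨t, ht, htA, hc⟩ := key A.card
  have hn : (b :: t).Nodup := by
    have := TermChain.nodup (R := fun a b => R b a) hR' _
      (MaxChain.rev hc (by intro x hx; simp at hx; subst hx; exact hh))
    exact List.nodup_reverse.1 this
  have h1 : (b :: t).toFinset.card ≤ A.card :=
    Finset.card_le_card (fun a ha => htA a (by simpa using ha))
  rw [List.toFinset_card_of_nodup hn] at h1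
  simp at h1
  omega

/-- Summing over the classes of a relation on a finite set. -/
theorem orbit_sum {α : Type} (r : α → α → Prop) (S : Set α) (hS : S.Finite)
    (hr : ∀ a b, r a b → a ∈ S ∧ b ∈ S) (f : α → ℕ) :
    (∑ᶠ O ∈ {O : Set α | ∃ w, w ∈ S ∧ O = {w' | Relation.EqvGen r w w'}}, ∑ᶠ w ∈ O, f w)
      = ∑ᶠ w ∈ S, f w := by
  have hmem : ∀ a b, Relation.EqvGen r a b → (a ∈ S ↔ b ∈ S) := by
    intro a b h
    induction h with
    | rel x y h => exact ⟨fun _ => (hr _ _ h).2, fun _ => (hr _ _ h).1⟩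
    | refl x => rfl
    | symm x y _ ih => exact ih.symm
    | trans x y z _ _ h1 h2 => exact h1.trans h2
  set T : Set (Set α) := {O : Set α | ∃ w, w ∈ S ∧ O = {w' | Relation.EqvGen r w w'}} with hT
  have hsub : ∀ O ∈ T, O ⊆ S := by
    rintro O ⟨w, hw, rfl⟩ x hx
    exact (hmem _ _ hx).1 hw
  have hU : ⋃₀ T = S := by
    apply Set.Subset.antisymm
    · exact Set.sUnion_subset hsub
    · intro w hw
      exact ⟨_, ⟨w, hw, rfl⟩, Relation.EqvGen.refl w⟩
  have hTf : T.Finite := hS.finite_subsets.subset hsub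
  have hd : T.PairwiseDisjoint id := by
    rintro O ⟨w, hw, rfl⟩ O' ⟨w', hw', rfl⟩ hne
    rw [Function.onFun, Set.disjoint_left]
    intro x hx hx'
    apply hne
    have hww : Relation.EqvGen r w w' := hx.trans _ _ _ (hx'.symm _ _)
    ext y
    exact ⟨fun hy => (hww.symm _ _).trans _ _ _ hy, fun hy => hww.trans _ _ _ hy⟩
  rw [← finsum_mem_sUnion hd hTf (fun O hO => hS.subset (hsub O hO)), hU]

variable {Q : QuivRel}

theorem rel_char (hQ : IsGentle Q) (st : SigmaTau Q) (a b : ℕ) : (a, b) ∈ Q.rel ↔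
    a ∈ Q.A ∧ b ∈ Q.A ∧ Q.src a = Q.tgt b ∧ st.σ a = st.τ b := by
  obtain ⟨_, _, _, h, _⟩ := hQ
  constructor
  · intro hab
    obtain ⟨h1, h2, h3⟩ := h _ hab
    exact ⟨h1, h2, h3, (st.rel_iff a h1 b h2 h3).1 hab⟩
  · rintro ⟨h1, h2, h3, h4⟩
    exact (st.rel_iff a h1 b h2 h3).2 h4

theorem src_inj (st : SigmaTau Q) {a b : ℕ} (ha : a ∈ Q.A) (hb : b ∈ Q.A)
    (h : Q.src a = Q.src b) (h' : st.σ a = st.σ b) : a = b := by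
  by_contra hne
  have := st.σ_src a ha b hb hne h
  rcases st.σ_pm a ha with h1 | h1 <;> omega

theorem tgt_inj (st : SigmaTau Q) {a b : ℕ} (ha : a ∈ Q.A) (hb : b ∈ Q.A)
    (h : Q.tgt a = Q.tgt b) (h' : st.τ a = st.τ b) : a = b := by
  by_contra hne
  have := st.τ_tgt a ha b hb hne h
  rcases st.τ_pm a ha with h1 | h1 <;> omega

theorem rel_right_unique (hQ : IsGentle Q) (st : SigmaTau Q) (a b c : ℕ)
    (h : (a, b) ∈ Q.rel) (h' : (a, c) ∈ Q.rel) : b = c := by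
  rw [rel_char hQ st] at h h'
  exact tgt_inj st h.2.1 h'.2.1 (h.2.2.1.symm.trans h'.2.2.1) (h.2.2.2.symm.trans h'.2.2.2)

theorem rel_left_unique (hQ : IsGentle Q) (st : SigmaTau Q) (a b c : ℕ)
    (h : (b, a) ∈ Q.rel) (h' : (c, a) ∈ Q.rel) : b = c := by
  rw [rel_char hQ st] at h h'
  exact src_inj st h.1 h'.1 (h.2.2.1.trans h'.2.2.1.symm) (h.2.2.2.trans h'.2.2.2.symm)

theorem inN_arrows (hQ : IsGentle Q) (st : SigmaTau Q) (l : List ℕ) :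
    InN Q st (.arrows l) ↔
      l ≠ [] ∧ (∀ a ∈ l, a ∈ Q.A) ∧ MaxChain (fun a b => (a, b) ∈ Q.rel) l := by
  unfold InN MaxChain TermChain
  simp only [IsAntiThread, IsAntiList, Thread.target, Thread.source, Thread.tauAnti,
    Thread.sigma]
  by_cases hl : l = []
  · simp [hl]
  have hh : l.head? = some l.head! := by
    cases l with
    | nil => exact absurd rfl hl
    | cons a t => simp
  have hg : l.getLast? = some l.getLast! := by
    rw [List.getLast!_eq_getLast?_getD, List.getLast?_eq_some_getLast hl]; rfl
  have hhm : l.head! ∈ l := List.mem_of_mem_head? hh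
  have hgm : l.getLast! ∈ l := List.mem_of_mem_getLast? hg
  rw [hh, hg]
  simp only [Option.mem_some_iff, forall_eq', rel_char hQ st]
  constructor
  · rintro ⟨⟨_, hA, hc⟩, h1, h2⟩
    refine ⟨hl, hA, ⟨hc, ?_⟩, ?_⟩
    · rintro b ⟨_, hb, h3, h4⟩
      exact h2 ⟨b, hb, h3.symm, h4.symm⟩
    · rintro a ⟨ha, _, h3, h4⟩
      exact h1 ⟨a, ha, h3, h4⟩
  · rintro ⟨_, hA, ⟨hc, h2⟩, h1⟩
    refine ⟨⟨hl, hA, hc⟩, ?_, ?_⟩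
    · rintro ⟨a, ha, h3, h4⟩
      exact h1 a ⟨ha, hA _ hhm, h3, h4⟩
    · rintro ⟨b, hb, h3, h4⟩
      exact h2 b ⟨hA _ hgm, hb, h3.symm, h4.symm⟩

/-- The invariant identifying a maximal antipath. -/
def tgtPair (st : SigmaTau Q) (w : Thread) : ℕ × ℤ := (w.target Q, w.tauAnti st)

theorem tgtPair_injOn (hQ : IsGentle Q) (st : SigmaTau Q) :
    Set.InjOn (tgtPair st) {w | InN Q st w} := by
  intro w hw w' hw' h
  obtain ⟨h1, h2⟩ := Prod.mk.inj h
  have nt : ∀ (x : ℕ) (ε : ℤ) (l : List ℕ), InN Q st (.triv x ε) → InN Q st (.arrows l) →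
      (Thread.triv x ε).target Q = (Thread.arrows l).target Q →
      (Thread.triv x ε).tauAnti st = (Thread.arrows l).tauAnti st → False := by
    intro x ε l hx hl e1 e2
    obtain ⟨hne, hA, _⟩ := (inN_arrows hQ st l).1 hl
    refine hx.2.2 ⟨l.head!, ?_, e1.symm, e2.symm⟩
    cases l with
    | nil => exact absurd rfl hne
    | cons a t => exact hA _ (by simp)
  cases w with
  | triv x ε =>
    cases w' with
    | triv y δ =>
      simp only [Thread.target, Thread.tauAnti] at h1 h2
      rw [h1, h2]
    | arrows l => exact (nt _ _ _ hw hw' h1 h2).elim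
  | arrows l =>
    cases w' with
    | triv y δ => exact (nt _ _ _ hw' hw h1.symm h2.symm).elim
    | arrows l' =>
      obtain ⟨hne, hA, hm⟩ := (inN_arrows hQ st l).1 hw
      obtain ⟨hne', hA', hm'⟩ := (inN_arrows hQ st l').1 hw'
      cases l with
      | nil => exact absurd rfl hne
      | cons a t =>
        cases l' with
        | nil => exact absurd rfl hne'
        | cons a' t' =>
          have haa : a = a' := tgt_inj st (hA a (by simp)) (hA' a' (by simp)) h1 h2
          subst haa
          rw [MaxChain.eq_of_mem (rel_right_unique hQ st) (rel_left_unique hQ st) hm hm'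
            (a := a) (by simp) (by simp)]

/-- All pairs (vertex, sign). -/
def signed (Q : QuivRel) : Finset (ℕ × ℤ) := Q.V ×ˢ {1, -1}

/-- The pairs used up by starts of arrows. -/
def used (st : SigmaTau Q) : Finset (ℕ × ℤ) := Q.A.image fun a => (Q.src a, st.σ a)

theorem tgtPair_image (hQ : IsGentle Q) (st : SigmaTau Q) :
    tgtPair st '' {w | InN Q st w} = ((signed Q \ used st : Finset (ℕ × ℤ)) : Set (ℕ × ℤ)) := by
  ext ⟨x, ε⟩
  simp only [Set.mem_image, Set.mem_setOf_eq, Finset.coe_sdiff, Set.mem_diff, Finset.mem_coe,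
    signed, used, Finset.mem_product, Finset.mem_insert, Finset.mem_singleton, Finset.mem_image,
    tgtPair, Prod.mk.injEq]
  constructor
  · rintro ⟨w, hw, rfl, rfl⟩
    refine ⟨?_, hw.2.1⟩
    cases w with
    | triv y δ => exact hw.1
    | arrows l =>
      obtain ⟨hne, hA, hm⟩ := (inN_arrows hQ st l).1 hw
      cases l with
      | nil => exact absurd rfl hne
      | cons a t => exact ⟨(hQ.2.1 a (hA a (by simp))).2, st.τ_pm a (hA a (by simp))⟩
  · rintro ⟨hx, hu⟩
    by_cases hb : ∃ b ∈ Q.A, Q.tgt b = x ∧ st.τ b = ε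
    · obtain ⟨b, hbA, rfl, rfl⟩ := hb
      obtain ⟨t, htA, hm⟩ := MaxChain.exists (R := fun a b => (a, b) ∈ Q.rel) Q.A
        (fun a b h => ⟨((rel_char hQ st a b).1 h).1, ((rel_char hQ st a b).1 h).2.1⟩)
        (rel_left_unique hQ st) hbA
        (fun a h => hu ⟨a, ((rel_char hQ st a b).1 h).1, ((rel_char hQ st a b).1 h).2.2⟩)
      exact ⟨.arrows (b :: t), (inN_arrows hQ st _).2 ⟨by simp, htA, hm⟩, rfl, rfl⟩
    · exact ⟨.triv x ε, ⟨hx, hu, hb⟩, rfl, rfl⟩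

theorem N_finite (hQ : IsGentle Q) (st : SigmaTau Q) : {w | InN Q st w}.Finite := by
  apply Set.Finite.of_finite_image _ (tgtPair_injOn hQ st)
  rw [tgtPair_image hQ st]
  exact Finset.finite_toSet _

theorem N_card (hQ : IsGentle Q) (st : SigmaTau Q) :
    {w | InN Q st w}.ncard + Q.A.card = 2 * Q.V.card := by
  rw [← Set.ncard_image_of_injOn (tgtPair_injOn hQ st), tgtPair_image hQ st,
    Set.ncard_coe_finset]
  have h1 : (used st).card = Q.A.card := by
    apply Finset.card_image_of_injOn
    intro a ha b hb h
    obtain ⟨h1, h2⟩ := Prod.mk.inj h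
    exact src_inj st ha hb h1 h2
  have h2 : used st ⊆ signed Q := by
    intro p hp
    obtain ⟨a, ha, rfl⟩ := Finset.mem_image.1 hp
    simp only [signed, Finset.mem_product, Finset.mem_insert, Finset.mem_singleton]
    exact ⟨(hQ.2.1 a ha).1, st.σ_pm a ha⟩
  have h3 : (signed Q).card = 2 * Q.V.card := by
    rw [signed, Finset.card_product, mul_comm]; rfl
  rw [← h1, Finset.card_sdiff_add_card_eq_card h2, h3]

/-- The set of arrows occurring in a thread. -/
def Thread.supp : Thread → Finset ℕ
  | .triv _ _ => ∅
  | .arrows l => l.toFinset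

theorem N_len (hQ : IsGentle Q) (st : SigmaTau Q) :
    (∑ᶠ w ∈ {w | InN Q st w}, Thread.len w) + {a | InC Q st a}.ncard = Q.A.card := by
  classical
  rw [finsum_mem_eq_finite_toFinset_sum _ (N_finite hQ st)]
  have h1 : ∑ w ∈ (N_finite hQ st).toFinset, Thread.len w
      = ∑ w ∈ (N_finite hQ st).toFinset, w.supp.card := by
    apply Finset.sum_congr rfl
    intro w hw
    rw [Set.Finite.mem_toFinset] at hw
    cases w with
    | triv x ε => rfl
    | arrows l =>
      obtain ⟨_, _, hm⟩ := (inN_arrows hQ st l).1 hw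
      exact (List.toFinset_card_of_nodup (TermChain.nodup (rel_right_unique hQ st) l hm.1)).symm
  rw [h1, ← Finset.card_biUnion]
  · have hC : {a | InC Q st a}
        = ((Q.A \ (N_finite hQ st).toFinset.biUnion Thread.supp : Finset ℕ) : Set ℕ) := by
      ext a
      simp only [Set.mem_setOf_eq, InC, Finset.coe_sdiff, Set.mem_diff, Finset.mem_coe,
        Finset.mem_biUnion, Set.Finite.mem_toFinset]
      refine and_congr_right fun _ => not_congr ⟨?_, ?_⟩
      · rintro ⟨l, hl, ha⟩
        exact ⟨_, hl, by simpa [Thread.supp] using ha⟩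
      · rintro ⟨w, hw, ha⟩
        cases w with
        | triv x ε => simp [Thread.supp] at ha
        | arrows l => exact ⟨l, hw, by simpa [Thread.supp] using ha⟩
    rw [hC, Set.ncard_coe_finset, add_comm]
    apply Finset.card_sdiff_add_card_eq_card
    intro a ha
    simp only [Finset.mem_biUnion, Set.Finite.mem_toFinset] at ha
    obtain ⟨w, hw, ha⟩ := ha
    cases w with
    | triv x ε => simp [Thread.supp] at ha
    | arrows l => exact ((inN_arrows hQ st l).1 hw).2.1 a (by simpa [Thread.supp] using ha)
  · intro w hw w' hw' hne
    simp only [Finset.mem_coe, Set.Finite.mem_toFinset] at hw hw'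
    rw [Function.onFun, Finset.disjoint_left]
    intro a ha ha'
    apply hne
    cases w with
    | triv x ε => simp [Thread.supp] at ha
    | arrows l =>
      cases w' with
      | triv x ε => simp [Thread.supp] at ha'
      | arrows l' =>
        rw [MaxChain.eq_of_mem (rel_right_unique hQ st) (rel_left_unique hQ st)
          ((inN_arrows hQ st l).1 hw).2.2 ((inN_arrows hQ st l').1 hw').2.2
          (a := a) (by simpa [Thread.supp] using ha) (by simpa [Thread.supp] using ha')]

end Helpers

/-- For a gentle quiver `𝚫`,
`Σ_{𝒪 ∈ 𝒩/ℤ ⊔ 𝒞/ℤ} p(𝒪) = 2|Δ₀| - |Δ₁|` and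
`Σ_{𝒪 ∈ 𝒩/ℤ ⊔ 𝒞/ℤ} q(𝒪) = |Δ₁|` (the first equality is stated additively to
avoid truncated subtraction). -/
theorem stmt0 (Q : QuivRel) (hQ : IsGentle Q) (st : SigmaTau Q) :
    (((∑ᶠ O ∈ {O : Set Thread | NOrbit Q st O}, pN O) +
        (∑ᶠ O ∈ {O : Set ℕ | COrbit Q st O}, (0 : ℕ))) + Q.A.card
      = 2 * Q.V.card) ∧
    ((∑ᶠ O ∈ {O : Set Thread | NOrbit Q st O}, qN O) +
        (∑ᶠ O ∈ {O : Set ℕ | COrbit Q st O}, O.ncard)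
      = Q.A.card) := by
  have hN : ∀ a b, PhiRel Q st a b → a ∈ {w | InN Q st w} ∧ b ∈ {w | InN Q st w} :=
    fun a b h => ⟨h.1, h.2.1⟩
  have hC : ∀ a b, PsiRel Q st a b → a ∈ {a | InC Q st a} ∧ b ∈ {a | InC Q st a} :=
    fun a b h => ⟨h.1, h.2.1⟩
  have hCf : {a | InC Q st a}.Finite := Q.A.finite_toSet.subset (fun a h => h.1)
  have e1 := orbit_sum (PhiRel Q st) _ (N_finite hQ st) hN (fun _ => 1)
  have e2 := orbit_sum (PhiRel Q st) _ (N_finite hQ st) hN Thread.len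
  have e3 := orbit_sum (PsiRel Q st) _ hCf hC (fun _ => 1)
  simp only [finsum_one] at e1 e3
  constructor
  · have h := N_card hQ st
    rw [← e1] at h
    rw [finsum_mem_zero, add_zero]
    exact h
  · have h := N_len hQ st
    rw [← e2, ← e3] at h
    exact h

end GentleQuiv
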